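/- Let w_a, w_{a*}, w_b, w_{b*} be words and W⁺, W⁻ finite word sets with w_a, w_b ∉ W⁺ and w_{a*}, w_{b*} ∉ W⁻; for x ∈ {a, b} set W^x := {w_x} ∪ W⁺ and W^x_* := {w_{x*}} ∪ W⁻. Then for every context index j: PMI(w_{b*}, c_j) = PMI(w_{a*}, c_j) − PMI(w_a, c_j) + PMI(w_b, c_j) + (ρ^{W^b,W^b_*}_j − ρ^{W^a,W^a_*}_j) + (σ^{W^b}_j − σ^{W^b_*}_j) − (σ^{W^a}_j − σ^{W^a_*}_j) − ((τ^{W^b} − τ^{W^b_*}) − (τ^{W^a} − τ^{W^a_*})). (Paper's Lemma 3: the PMI-level analogy identity.) -/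

import Mathlib

open MeasureTheory Real Finset Matrix

namespace AnalogiesExplained

variable {Ω : Type*}

/-- Conditional probability `p(B ∣ A) = μ(A ∩ B) / μ(A)` (as a real number). -/
noncomputable def condP [MeasurableSpace Ω] (μ : Measure Ω) (A B : Set Ω) : ℝ :=
  (μ (A ∩ B)).toReal / (μ A).toReal

/-- Pointwise mutual information `PMI(A, B) = log (μ(A ∩ B) / (μ(A)·μ(B)))`. -/
noncomputable def PMI [MeasurableSpace Ω] (μ : Measure Ω) (A B : Set Ω) : ℝ :=
  Real.log ((μ (A ∩ B)).toReal / ((μ A).toReal * (μ B).toReal))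

/-- The joint event of a finite word set: `A_W = ⋂ i ∈ W, A i`. -/
def jointEvent {ι : Type*} (A : ι → Set Ω) (W : Finset ι) : Set Ω :=
  ⋂ i ∈ W, A i

/-- Paraphrase error `ρ^{W,W*}_j = log (p(B_j ∣ A_{W*}) / p(B_j ∣ A_W))`. -/
noncomputable def rho [MeasurableSpace Ω] (μ : Measure Ω) (AW AWstar B : Set Ω) : ℝ :=
  Real.log (condP μ AWstar B / condP μ AW B)

/-- Conditional-dependence error `σ^W_j = log (p(A_W ∣ B_j) / ∏_{i ∈ W} p(A_i ∣ B_j))`. -/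
noncomputable def sigma [MeasurableSpace Ω] {ι : Type*} (μ : Measure Ω) (A : ι → Set Ω)
    (W : Finset ι) (B : Set Ω) : ℝ :=
  Real.log (condP μ B (jointEvent A W) / ∏ i ∈ W, condP μ B (A i))

/-- Marginal-dependence error `τ^W = log (μ(A_W) / ∏_{i ∈ W} μ(A_i))`. -/
noncomputable def tau [MeasurableSpace Ω] {ι : Type*} (μ : Measure Ω) (A : ι → Set Ω)
    (W : Finset ι) : ℝ :=
  Real.log ((μ (jointEvent A W)).toReal / ∏ i ∈ W, (μ (A i)).toReal)

/-! Each log-probability `log p(B ∣ A_W)` is `PMI(A_W, B) + log p(B)`, so a paraphrase error is a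
difference of PMIs of joint events. Bayes' rule expands `PMI(A_W, B)` as the sum of the PMIs of the
words of `W`, corrected by `σ^W - τ^W`. Comparing the paraphrase errors for `b` and `a`, the words
of `W⁺` and `W⁻` occur in both and cancel. -/

section FiniteMeasure

variable {ι : Type*} {A : ι → Set Ω} {W Wstar : Finset ι} {S T B : Set Ω}

theorem jointEvent_subset {i : ι} (hi : i ∈ W) : jointEvent A W ⊆ A i :=
  Set.biInter_subset_of_mem hi

variable [MeasurableSpace Ω]

theorem PMI_comm (μ : Measure Ω) (S T : Set Ω) : PMI μ S T = PMI μ T S := by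
  simp only [PMI, Set.inter_comm, mul_comm]

variable {μ : Measure Ω} [IsFiniteMeasure μ]

theorem toReal_measure_ne_zero_of_subset (hST : S ⊆ T) (hS : μ S ≠ 0) : (μ T).toReal ≠ 0 :=
  (ENNReal.toReal_pos (measure_pos_of_superset hST hS).ne' (measure_ne_top μ T)).ne'

theorem condP_ne_zero (h : μ (S ∩ T) ≠ 0) : condP μ S T ≠ 0 :=
  div_ne_zero (toReal_measure_ne_zero_of_subset subset_rfl h)
    (toReal_measure_ne_zero_of_subset Set.inter_subset_left h)

theorem PMI_eq_log_condP_sub_log (h : μ (S ∩ T) ≠ 0) :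
    PMI μ S T = log (condP μ S T) - log (μ T).toReal := by
  have hT : (μ T).toReal ≠ 0 :=
    toReal_measure_ne_zero_of_subset Set.inter_subset_right h
  rw [← log_div (condP_ne_zero h) hT, PMI, condP, div_div]

theorem rho_eq_PMI_sub_PMI (hS : μ (S ∩ B) ≠ 0) (hT : μ (T ∩ B) ≠ 0) :
    rho μ S T B = PMI μ T B - PMI μ S B := by
  rw [rho, log_div (condP_ne_zero hT) (condP_ne_zero hS), PMI_eq_log_condP_sub_log hS,
    PMI_eq_log_condP_sub_log hT, sub_sub_sub_cancel_right]

theorem sigma_eq_log_sub_sum (h : μ (jointEvent A W ∩ B) ≠ 0) :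
    sigma μ A W B = log (condP μ B (jointEvent A W)) - ∑ i ∈ W, log (condP μ B (A i)) := by
  rw [Set.inter_comm] at h
  have hA : ∀ i ∈ W, condP μ B (A i) ≠ 0 := fun i hi =>
    condP_ne_zero
      (measure_pos_of_superset (Set.inter_subset_inter_right B (jointEvent_subset hi)) h).ne'
  rw [sigma, log_div (condP_ne_zero h) (prod_ne_zero_iff.2 hA), log_prod hA]

theorem tau_eq_log_sub_sum (h : μ (jointEvent A W) ≠ 0) :
    tau μ A W = log (μ (jointEvent A W)).toReal - ∑ i ∈ W, log (μ (A i)).toReal := by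
  have hA : ∀ i ∈ W, (μ (A i)).toReal ≠ 0 := fun i hi =>
    toReal_measure_ne_zero_of_subset (jointEvent_subset hi) h
  rw [tau, log_div (toReal_measure_ne_zero_of_subset subset_rfl h) (prod_ne_zero_iff.2 hA),
    log_prod hA]

theorem PMI_jointEvent (h : μ (jointEvent A W ∩ B) ≠ 0) :
    PMI μ (jointEvent A W) B = ∑ i ∈ W, PMI μ (A i) B + sigma μ A W B - tau μ A W := by
  have bayes {S : Set Ω} (hS : μ (S ∩ B) ≠ 0) :
      PMI μ S B = log (condP μ B S) - log (μ S).toReal := by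
    rw [Set.inter_comm] at hS
    rw [PMI_comm, PMI_eq_log_condP_sub_log hS]
  have sum_PMI : ∑ i ∈ W, PMI μ (A i) B =
      ∑ i ∈ W, log (condP μ B (A i)) - ∑ i ∈ W, log (μ (A i)).toReal := by
    rw [← sum_sub_distrib]
    exact sum_congr rfl fun i hi => bayes
      (measure_pos_of_superset (Set.inter_subset_inter_left B (jointEvent_subset hi)) h).ne'
  rw [bayes h, sum_PMI, sigma_eq_log_sub_sum h,
    tau_eq_log_sub_sum (measure_pos_of_superset Set.inter_subset_left h).ne']
  ring

theorem sum_PMI_paraphrase (hW : μ (jointEvent A W ∩ B) ≠ 0)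
    (hWstar : μ (jointEvent A Wstar ∩ B) ≠ 0) :
    ∑ i ∈ Wstar, PMI μ (A i) B =
      ∑ i ∈ W, PMI μ (A i) B + rho μ (jointEvent A W) (jointEvent A Wstar) B
        + (sigma μ A W B - sigma μ A Wstar B) - (tau μ A W - tau μ A Wstar) := by
  rw [rho_eq_PMI_sub_PMI hW hWstar, PMI_jointEvent hW, PMI_jointEvent hWstar]
  ring

theorem pmi_analogy_identity_general [DecidableEq ι] {a astar b bstar : ι} {Wp Wm : Finset ι}
    (ha : a ∉ Wp) (hb : b ∉ Wp) (has : astar ∉ Wm) (hbs : bstar ∉ Wm)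
    (hWa : μ (jointEvent A (insert a Wp) ∩ B) ≠ 0)
    (hWb : μ (jointEvent A (insert b Wp) ∩ B) ≠ 0)
    (hWas : μ (jointEvent A (insert astar Wm) ∩ B) ≠ 0)
    (hWbs : μ (jointEvent A (insert bstar Wm) ∩ B) ≠ 0) :
    PMI μ (A bstar) B =
      PMI μ (A astar) B - PMI μ (A a) B + PMI μ (A b) B
        + (rho μ (jointEvent A (insert b Wp)) (jointEvent A (insert bstar Wm)) B
            - rho μ (jointEvent A (insert a Wp)) (jointEvent A (insert astar Wm)) B)
        + (sigma μ A (insert b Wp) B - sigma μ A (insert bstar Wm) B)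
        - (sigma μ A (insert a Wp) B - sigma μ A (insert astar Wm) B)
        - ((tau μ A (insert b Wp) - tau μ A (insert bstar Wm))
            - (tau μ A (insert a Wp) - tau μ A (insert astar Wm))) := by
  have paraphrase_a := sum_PMI_paraphrase hWa hWas
  have paraphrase_b := sum_PMI_paraphrase hWb hWbs
  rw [sum_insert ha, sum_insert has] at paraphrase_a
  rw [sum_insert hb, sum_insert hbs] at paraphrase_b
  linear_combination paraphrase_b - paraphrase_a

end FiniteMeasure

/-- **Lemma 3 (Analogy identity at the PMI level).** With `W^x = {w_x} ∪ W⁺` and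
`W^x_* = {w_{x*}} ∪ W⁻` for `x ∈ {a, b}`, for every context index `j`:
`PMI(w_{b*},c_j) = PMI(w_{a*},c_j) − PMI(w_a,c_j) + PMI(w_b,c_j)
 + (ρ^{W^b,W^b_*}_j − ρ^{W^a,W^a_*}_j) + (σ^{W^b}_j − σ^{W^b_*}_j) − (σ^{W^a}_j − σ^{W^a_*}_j)
 − ((τ^{W^b} − τ^{W^b_*}) − (τ^{W^a} − τ^{W^a_*}))`. -/
theorem pmi_analogy_identity
    [MeasurableSpace Ω] (μ : Measure Ω) [IsProbabilityMeasure μ]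
    {ι : Type*} [DecidableEq ι] (A : ι → Set Ω) {n : ℕ} (B : Fin n → Set Ω)
    (a astar b bstar : ι) (Wp Wm : Finset ι)
    (ha : a ∉ Wp) (hb : b ∉ Wp) (has : astar ∉ Wm) (hbs : bstar ∉ Wm)
    (hmA : ∀ i, MeasurableSet (A i)) (hmB : ∀ j, MeasurableSet (B j))
    (hA : ∀ i ∈ insert a (insert b Wp) ∪ insert astar (insert bstar Wm),
      0 < (μ (A i)).toReal)
    (hB : ∀ j, 0 < (μ (B j)).toReal)
    (hAWa : 0 < (μ (jointEvent A (insert a Wp))).toReal)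
    (hAWb : 0 < (μ (jointEvent A (insert b Wp))).toReal)
    (hAWas : 0 < (μ (jointEvent A (insert astar Wm))).toReal)
    (hAWbs : 0 < (μ (jointEvent A (insert bstar Wm))).toReal)
    (hAB : ∀ i ∈ insert a (insert b Wp) ∪ insert astar (insert bstar Wm),
      ∀ j, 0 < (μ (A i ∩ B j)).toReal)
    (hAWaB : ∀ j, 0 < (μ (jointEvent A (insert a Wp) ∩ B j)).toReal)
    (hAWbB : ∀ j, 0 < (μ (jointEvent A (insert b Wp) ∩ B j)).toReal)
    (hAWasB : ∀ j, 0 < (μ (jointEvent A (insert astar Wm) ∩ B j)).toReal)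
    (hAWbsB : ∀ j, 0 < (μ (jointEvent A (insert bstar Wm) ∩ B j)).toReal) :
    ∀ j, PMI μ (A bstar) (B j) =
      PMI μ (A astar) (B j) - PMI μ (A a) (B j) + PMI μ (A b) (B j)
        + (rho μ (jointEvent A (insert b Wp)) (jointEvent A (insert bstar Wm)) (B j)
            - rho μ (jointEvent A (insert a Wp)) (jointEvent A (insert astar Wm)) (B j))
        + (sigma μ A (insert b Wp) (B j) - sigma μ A (insert bstar Wm) (B j))
        - (sigma μ A (insert a Wp) (B j) - sigma μ A (insert astar Wm) (B j))
        - ((tau μ A (insert b Wp) - tau μ A (insert bstar Wm))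
            - (tau μ A (insert a Wp) - tau μ A (insert astar Wm))) := by
  intro j
  have measure_ne_zero {S : Set Ω} (hS : 0 < (μ S).toReal) : μ S ≠ 0 :=
    (ENNReal.toReal_pos_iff.1 hS).1.ne'
  exact pmi_analogy_identity_general ha hb has hbs (measure_ne_zero (hAWaB j))
    (measure_ne_zero (hAWbB j)) (measure_ne_zero (hAWasB j)) (measure_ne_zero (hAWbsB j))

end AnalogiesExplained
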